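/- Let θ ∈ (0,π) and define u₂(x) = (tan(θ/2)/2)|x|² + (x₁ + x₂) ln|x| for x = (x₁,x₂) ∈ ℝ² with |x| > 2. Then there exist constants C > 0 and R ≥ 2 such that for all |x| ≥ R: |arctan λ₁(D²u₂(x)) + arctan λ₂(D²u₂(x)) − θ| ≤ C |x|^{−1}, and the gradient of the function x ↦ arctan λ₁(D²u₂(x)) + arctan λ₂(D²u₂(x)) has norm at most C |x|^{−2}. -/

import Mathlib

/-!
Write `k = tan (θ/2) > 0` and let `z = x / |x|²` be the inversion of `x`. The Hessian of `u₂` has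
trace `2k + 2(z₀ + z₁)` and determinant `k² + 2k(z₀ + z₁) + 4 z₀ z₁`: after cancellation, both are
polynomials in `z`. Since `arctan λ₁ + arctan λ₂ = π/2 - arctan ((1 - λ₁λ₂) / (λ₁ + λ₂))` as soon as
`λ₁ + λ₂ > 0`, the phase at `x` equals `Φ(z)` with `Φ` smooth near the origin and `Φ(0) = θ`
(`phase_hess`). In particular `Φ` is Lipschitz near `0`, and both bounds follow from `|z| = |x|⁻¹`
and from `|z - w| = |x - y| / (|x| |y|)` for the inversions `z`, `w` of `x`, `y`. The eigenvalues
themselves need not be differentiable where they coincide; the trace/determinant formula avoids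
this difficulty.
-/

open Real MeasureTheory

noncomputable section

abbrev E2 : Type := EuclideanSpace ℝ (Fin 2)

/-- Entries of the Hessian matrix `D²u(x)`. -/
noncomputable def Hess (u : E2 → ℝ) (x : E2) : Matrix (Fin 2) (Fin 2) ℝ :=
  Matrix.of fun i j =>
    iteratedFDeriv ℝ 2 u x ![EuclideanSpace.single i 1, EuclideanSpace.single j 1]

/-- Smaller eigenvalue of a symmetric `2×2` real matrix. -/
noncomputable def lam1 (M : Matrix (Fin 2) (Fin 2) ℝ) : ℝ :=
  ((M 0 0 + M 1 1) - Real.sqrt ((M 0 0 - M 1 1) ^ 2 + 4 * M 0 1 ^ 2)) / 2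

/-- Larger eigenvalue of a symmetric `2×2` real matrix. -/
noncomputable def lam2 (M : Matrix (Fin 2) (Fin 2) ℝ) : ℝ :=
  ((M 0 0 + M 1 1) + Real.sqrt ((M 0 0 - M 1 1) ^ 2 + 4 * M 0 1 ^ 2)) / 2

/-- The Lagrangian phase `F(M) = arctan λ₁(M) + arctan λ₂(M)`. -/
noncomputable def Phase (M : Matrix (Fin 2) (Fin 2) ℝ) : ℝ :=
  Real.arctan (lam1 M) + Real.arctan (lam2 M)

open Filter Topology

lemma arctan_add_of_add_pos {a b : ℝ} (h : 0 < a + b) :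
    arctan a + arctan b = π / 2 - arctan ((1 - a * b) / (a + b)) := by
  have hpos : 0 < arctan a + arctan b := by
    have : arctan (-b) < arctan a := arctan_strictMono (by linarith)
    rw [arctan_neg] at this
    linarith
  have h1 := arctan_lt_pi_div_two a
  have h2 := arctan_lt_pi_div_two b
  have hca := cos_arctan_pos a
  have hcb := cos_arctan_pos b
  have hsa : sin (arctan a) = a * cos (arctan a) := by
    conv_rhs => rw [← tan_arctan a, arctan_tan (neg_pi_div_two_lt_arctan a) h1]
    exact (tan_mul_cos hca.ne').symm
  have hsb : sin (arctan b) = b * cos (arctan b) := by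
    conv_rhs => rw [← tan_arctan b, arctan_tan (neg_pi_div_two_lt_arctan b) h2]
    exact (tan_mul_cos hcb.ne').symm
  have key : tan (π / 2 - (arctan a + arctan b)) = (1 - a * b) / (a + b) := by
    rw [tan_eq_sin_div_cos, sin_pi_div_two_sub, cos_pi_div_two_sub, cos_add, sin_add, hsa, hsb]
    have hden : a * cos (arctan a) * cos (arctan b) + cos (arctan a) * (b * cos (arctan b)) ≠ 0 := by
      have : 0 < (a + b) * (cos (arctan a) * cos (arctan b)) := by positivity
      intro h0
      linarith
    rw [div_eq_div_iff hden h.ne']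
    ring
  rw [← key, arctan_tan (by linarith) (by linarith)]
  ring

lemma phase_eq (M : Matrix (Fin 2) (Fin 2) ℝ) (h : 0 < M 0 0 + M 1 1) :
    Phase M = π / 2 - arctan ((1 - (M 0 0 * M 1 1 - M 0 1 ^ 2)) / (M 0 0 + M 1 1)) := by
  have hs : lam1 M + lam2 M = M 0 0 + M 1 1 := by unfold lam1 lam2; ring
  have hp : lam1 M * lam2 M = M 0 0 * M 1 1 - M 0 1 ^ 2 := by
    have := Real.sq_sqrt (show 0 ≤ (M 0 0 - M 1 1) ^ 2 + 4 * M 0 1 ^ 2 by positivity)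
    unfold lam1 lam2
    linear_combination (-1 / 4) * this
  unfold Phase
  rw [arctan_add_of_add_pos (by rw [hs]; exact h), hs, hp]

/-- The function `½ k |x|² + (x₁ + x₂) ln |x|`, written in coordinates through `|x|²`. -/
def model (k : ℝ) (x : E2) : ℝ :=
  k / 2 * (x 0 ^ 2 + x 1 ^ 2) + (x 0 + x 1) * (1 / 2 * Real.log (x 0 ^ 2 + x 1 ^ 2))

/-- The partial derivative `∂_j` of `model k` away from the origin. -/
def modelPartial (k : ℝ) (j : Fin 2) (x : E2) : ℝ :=
  k * x j + 1 / 2 * Real.log (x 0 ^ 2 + x 1 ^ 2) + (x 0 + x 1) * x j * (x 0 ^ 2 + x 1 ^ 2)⁻¹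

lemma normSq (x : E2) : ‖x‖ ^ 2 = x 0 ^ 2 + x 1 ^ 2 := by
  simp [EuclideanSpace.norm_sq_eq, Fin.sum_univ_two]

lemma sq_pos_of {x : E2} (hx : 2 < ‖x‖) : 0 < x 0 ^ 2 + x 1 ^ 2 := by
  rw [← normSq]; positivity

lemma hasFDerivAt_coord (i : Fin 2) (x : E2) :
    HasFDerivAt (fun y : E2 => y i) (EuclideanSpace.proj i : E2 →L[ℝ] ℝ) x :=
  (EuclideanSpace.proj i : E2 →L[ℝ] ℝ).hasFDerivAt

lemma fderiv_model (k : ℝ) {x : E2} (hx : 0 < x 0 ^ 2 + x 1 ^ 2) (j : Fin 2) :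
    fderiv ℝ (model k) x (EuclideanSpace.single j 1) = modelPartial k j x := by
  have h0 := hasFDerivAt_coord 0 x
  have h1 := hasFDerivAt_coord 1 x
  have hq := (h0.pow 2).add (h1.pow 2)
  have H := (hq.const_mul (k / 2)).add ((h0.add h1).mul ((hq.log hx.ne').const_mul (1 / 2)))
  have H' : HasFDerivAt (model k) _ x := H
  rw [H'.fderiv]
  fin_cases j <;> simp [modelPartial] <;> field_simp <;> ring

lemma fderiv_modelPartial (k : ℝ) {x : E2} (hx : 0 < x 0 ^ 2 + x 1 ^ 2) (i j : Fin 2) :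
    fderiv ℝ (modelPartial k j) x (EuclideanSpace.single i 1) =
      (k + (x 0 + x 1) / (x 0 ^ 2 + x 1 ^ 2)) * (if i = j then 1 else 0)
        + (x i + x j) / (x 0 ^ 2 + x 1 ^ 2)
        - 2 * (x 0 + x 1) * x i * x j / (x 0 ^ 2 + x 1 ^ 2) ^ 2 := by
  have h0 := hasFDerivAt_coord 0 x
  have h1 := hasFDerivAt_coord 1 x
  have hj := hasFDerivAt_coord j x
  have hq := (h0.pow 2).add (h1.pow 2)
  have hinv := (hasDerivAt_inv hx.ne').comp_hasFDerivAt x hq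
  have H := ((hj.const_mul k).add ((hq.log hx.ne').const_mul (1 / 2))).add
    (((h0.add h1).mul hj).mul hinv)
  have H' : HasFDerivAt (modelPartial k j) _ x := H
  rw [H'.fderiv]
  fin_cases j <;> fin_cases i <;> simp <;> field_simp <;> ring

lemma contDiffAt_model (k : ℝ) {x : E2} (hx : 0 < x 0 ^ 2 + x 1 ^ 2) :
    ContDiffAt ℝ 2 (model k) x := by
  have h (i : Fin 2) : ContDiffAt ℝ 2 (fun y : E2 => y i) x :=
    (EuclideanSpace.proj i : E2 →L[ℝ] ℝ).contDiff.contDiffAt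
  have hq := ((h 0).pow 2).add ((h 1).pow 2)
  exact (contDiffAt_const.mul hq).add
    (((h 0).add (h 1)).mul (contDiffAt_const.mul (hq.log hx.ne')))

lemma eventually_norm_gt {x : E2} (hx : 2 < ‖x‖) : ∀ᶠ y in 𝓝 x, 2 < ‖y‖ :=
  continuous_norm.continuousAt.eventually (lt_mem_nhds hx)

lemma hess_eq {u : E2 → ℝ} {k : ℝ} (hu : ∀ x : E2, 2 < ‖x‖ → u x = model k x)
    {x : E2} (hx : 2 < ‖x‖) (i j : Fin 2) :
    Hess u x i j =
      (k + (x 0 + x 1) / (x 0 ^ 2 + x 1 ^ 2)) * (if i = j then 1 else 0)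
        + (x i + x j) / (x 0 ^ 2 + x 1 ^ 2)
        - 2 * (x 0 + x 1) * x i * x j / (x 0 ^ 2 + x 1 ^ 2) ^ 2 := by
  have hq := sq_pos_of hx
  have heq : u =ᶠ[𝓝 x] model k := (eventually_norm_gt hx).mono hu
  have hd : DifferentiableAt ℝ (fderiv ℝ (model k)) x :=
    ((contDiffAt_model k hq).fderiv_right (m := 1) (by norm_num)).differentiableAt (by norm_num)
  have hp : (fun y => fderiv ℝ (model k) y (EuclideanSpace.single j 1)) =ᶠ[𝓝 x]
      modelPartial k j :=
    (eventually_norm_gt hx).mono fun y hy => fderiv_model k (sq_pos_of hy) j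
  have happ : fderiv ℝ (fun y => fderiv ℝ (model k) y (EuclideanSpace.single j 1)) x
      (EuclideanSpace.single i 1) = fderiv ℝ (fderiv ℝ (model k)) x
        (EuclideanSpace.single i 1) (EuclideanSpace.single j 1) := by
    rw [fderiv_clm_apply hd (differentiableAt_const _)]
    simp
  simp only [Hess, Matrix.of_apply]
  rw [iteratedFDeriv_two_apply, heq.fderiv.fderiv_eq]
  simp only [Matrix.cons_val_zero, Matrix.cons_val_one]
  rw [← happ, hp.fderiv_eq, fderiv_modelPartial k hq]

/-- The phase as a function of the inverted point `z = x / |x|²`. -/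
def invPhase (k : ℝ) (z : E2) : ℝ :=
  π / 2 - arctan ((1 - (k ^ 2 + 2 * k * (z 0 + z 1) + 4 * (z 0 * z 1))) / (2 * k + 2 * (z 0 + z 1)))

/-- The inversion `x / |x|²` in the unit circle. -/
def inv2 (x : E2) : E2 := (1 / ‖x‖) ^ 2 • x

lemma phase_hess {u : E2 → ℝ} {k : ℝ} (hu : ∀ x : E2, 2 < ‖x‖ → u x = model k x)
    {x : E2} (hx : 2 < ‖x‖) (hT : 0 < 2 * k + 2 * (inv2 x 0 + inv2 x 1)) :
    Phase (Hess u x) = invPhase k (inv2 x) := by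
  have hq := sq_pos_of hx
  have hz (i : Fin 2) : inv2 x i = x i / (x 0 ^ 2 + x 1 ^ 2) := by
    simp only [inv2, PiLp.smul_apply, smul_eq_mul, div_pow, normSq]
    ring
  have htr : Hess u x 0 0 + Hess u x 1 1 = 2 * k + 2 * (inv2 x 0 + inv2 x 1) := by
    rw [hess_eq hu hx, hess_eq hu hx, hz, hz]
    simp
    field_simp
    ring
  have hdet : Hess u x 0 0 * Hess u x 1 1 - Hess u x 0 1 ^ 2 =
      k ^ 2 + 2 * k * (inv2 x 0 + inv2 x 1) + 4 * (inv2 x 0 * inv2 x 1) := by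
    rw [hess_eq hu hx, hess_eq hu hx, hess_eq hu hx, hz, hz]
    simp
    field_simp
    ring
  rw [phase_eq _ (by rw [htr]; exact hT), htr, hdet, invPhase]

lemma contDiffAt_invPhase {k : ℝ} (hk : 0 < k) : ContDiffAt ℝ 1 (invPhase k) 0 := by
  have h (i : Fin 2) : ContDiffAt ℝ 1 (fun y : E2 => y i) 0 :=
    (EuclideanSpace.proj i : E2 →L[ℝ] ℝ).contDiff.contDiffAt
  have hs := (h 0).add (h 1)
  refine contDiffAt_const.sub (ContDiffAt.arctan (ContDiffAt.div
    (contDiffAt_const.sub ((contDiffAt_const.add (contDiffAt_const.mul hs)).add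
      (contDiffAt_const.mul ((h 0).mul (h 1)))))
    (contDiffAt_const.add (contDiffAt_const.mul hs)) ?_))
  simp [hk.ne']

lemma invPhase_zero {θ : ℝ} (hθ : θ ∈ Set.Ioo 0 π) : invPhase (tan (θ / 2)) 0 = θ := by
  obtain ⟨h0, h1⟩ := hθ
  have hk : 0 < tan (θ / 2) := tan_pos_of_pos_of_lt_pi_div_two (by linarith) (by linarith)
  have h := arctan_add_of_add_pos (add_pos hk hk)
  rw [arctan_tan (by linarith) (by linarith)] at h
  have e : invPhase (tan (θ / 2)) 0 = π / 2 - arctan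
      ((1 - tan (θ / 2) * tan (θ / 2)) / (tan (θ / 2) + tan (θ / 2))) := by
    simp [invPhase, sq, two_mul]
  rw [e, ← h]
  ring

lemma norm_inv2 (x : E2) : ‖inv2 x‖ = ‖x‖⁻¹ := by
  rcases eq_or_ne x 0 with rfl | hx
  · simp [inv2]
  · have : ‖x‖ ≠ 0 := norm_ne_zero_iff.mpr hx
    simp only [inv2, norm_smul, norm_pow, norm_div, norm_one, norm_norm]
    field_simp

lemma norm_inv2_sub {x y : E2} (hx : x ≠ 0) (hy : y ≠ 0) :
    ‖inv2 x - inv2 y‖ = ‖x - y‖ / (‖x‖ * ‖y‖) := by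
  have := dist_div_norm_sq_smul hx hy 1
  rw [dist_eq_norm, dist_eq_norm] at this
  rw [inv2, inv2, this]
  ring

theorem statement17
    (θ : ℝ) (hθ : θ ∈ Set.Ioo 0 π)
    (u₂ : E2 → ℝ)
    (hu₂ : ∀ x : E2, 2 < ‖x‖ →
      u₂ x = Real.tan (θ / 2) / 2 * ‖x‖ ^ 2 + (x 0 + x 1) * Real.log ‖x‖) :
    ∃ C > (0:ℝ), ∃ R : ℝ, 2 ≤ R ∧ ∀ x : E2, R ≤ ‖x‖ →
      |Phase (Hess u₂ x) - θ| ≤ C * ‖x‖ ^ (-1 : ℝ)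
      ∧ ‖gradient (fun y => Phase (Hess u₂ y)) x‖ ≤ C * ‖x‖ ^ (-2 : ℝ) := by
  set k := tan (θ / 2) with hkdef
  have hk : 0 < k := tan_pos_of_pos_of_lt_pi_div_two (by linarith [hθ.1]) (by linarith [hθ.2])
  have hu : ∀ x : E2, 2 < ‖x‖ → u₂ x = model k x := by
    intro x hx
    rw [hu₂ x hx, model, ← normSq, Real.log_pow]
    push_cast
    ring
  obtain ⟨K, U, hU, hLip⟩ := (contDiffAt_invPhase hk).exists_lipschitzOnWith
  have hcont : Continuous fun z : E2 => 2 * k + 2 * (z 0 + z 1) := by fun_prop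
  have hpos : ∀ᶠ z : E2 in 𝓝 0, 0 < 2 * k + 2 * (z 0 + z 1) :=
    hcont.continuousAt.eventually (lt_mem_nhds (by simp [hk]))
  obtain ⟨ε, hε, hball⟩ := Metric.mem_nhds_iff.mp (inter_mem hU hpos)
  have hmem : ∀ x : E2, ε⁻¹ < ‖x‖ →
      inv2 x ∈ U ∧ 0 < 2 * k + 2 * (inv2 x 0 + inv2 x 1) := by
    intro x hx
    have : inv2 x ∈ Metric.ball (0 : E2) ε := by
      rw [mem_ball_zero_iff, norm_inv2]
      exact inv_lt_of_inv_lt₀ hε hx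
    exact hball this
  -- `R` keeps the closed exterior inside the open region where both formulas hold.
  refine ⟨2 * K + 1, by positivity, max 2 ε⁻¹ + 1, by linarith [le_max_left 2 ε⁻¹], ?_⟩
  intro x hx
  have hx2 : 2 < ‖x‖ := by linarith [le_max_left 2 ε⁻¹]
  have hxε : ε⁻¹ < ‖x‖ := by linarith [le_max_right 2 ε⁻¹]
  have hx0 : 0 < ‖x‖ := by linarith
  have hxne : x ≠ 0 := norm_pos_iff.mp hx0
  obtain ⟨hxU, hxT⟩ := hmem x hxε
  have hPx := phase_hess hu hx2 hxT
  constructor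
  · have h := hLip.norm_sub_le hxU (mem_of_mem_nhds hU)
    rw [invPhase_zero hθ, sub_zero, norm_inv2, Real.norm_eq_abs] at h
    rw [hPx, rpow_neg_one]
    refine h.trans ?_
    gcongr
    linarith [K.coe_nonneg]
  · rw [gradient, LinearIsometryEquiv.norm_map]
    refine norm_fderiv_le_of_lip' ℝ (by positivity) ?_
    have h1 : ∀ᶠ y in 𝓝 x, max 2 (max ε⁻¹ (‖x‖ / 2)) < ‖y‖ :=
      continuous_norm.continuousAt.eventually
        (lt_mem_nhds (max_lt hx2 (max_lt hxε (by linarith))))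
    filter_upwards [h1] with y hy
    rw [max_lt_iff, max_lt_iff] at hy
    obtain ⟨hy2, hyε, hyx⟩ := hy
    have hy0 : 0 < ‖y‖ := by linarith
    obtain ⟨hyU, hyT⟩ := hmem y hyε
    rw [hPx, phase_hess hu hy2 hyT]
    refine (hLip.norm_sub_le hyU hxU).trans ?_
    rw [norm_inv2_sub (norm_pos_iff.mp hy0) hxne]
    have h2 : ‖y - x‖ / (‖y‖ * ‖x‖) ≤ ‖y - x‖ / (‖x‖ / 2 * ‖x‖) := by gcongr
    have h3 : ‖x‖ ^ (-2 : ℝ) = (‖x‖ ^ 2)⁻¹ := by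
      rw [rpow_neg hx0.le]; norm_cast
    calc (K : ℝ) * (‖y - x‖ / (‖y‖ * ‖x‖)) ≤ K * (‖y - x‖ / (‖x‖ / 2 * ‖x‖)) := by gcongr
      _ = 2 * K * (‖x‖ ^ 2)⁻¹ * ‖y - x‖ := by field_simp
      _ ≤ (2 * K + 1) * ‖x‖ ^ (-2 : ℝ) * ‖y - x‖ := by
        rw [h3]
        gcongr
        linarith
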